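/- Let n ≥ 3, let W be a 4-tensor on ℝⁿ satisfying W_{ijkl} = −W_{jikl} = −W_{ijlk}, W_{ijkl} = W_{klij}, the first Bianchi identity W_{ijkl} + W_{iklj} + W_{iljk} = 0, and Σ_i W_{ijil} = 0 for all j, l, and let B be a symmetric trace-free n×n real matrix (tr B = 0). Then | (n/(n−2)) Σ_{i,j,k} B_{ij} B_{jk} B_{ik} − Σ_{i,j,k,l} W_{ijkl} B_{ik} B_{jl} | ≤ √((n−2)/(2(n−1))) ( |W|² + (2n/(n−2)) |B|² )^{1/2} |B|², where |W|² := Σ_{i,j,k,l} W_{ijkl}² and |B|² := Σ_{i,j} B_{ij}². -/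

import Mathlib

open Finset

namespace WeylAux

variable {n : ℕ}

/-- Kronecker delta. -/
def dl (i j : Fin n) : ℝ := if i = j then 1 else 0

theorem dl_sq (i j : Fin n) : dl i j * dl i j = dl i j := by
  unfold dl; split_ifs <;> simp

theorem sum_dl (i : Fin n) (f : Fin n → ℝ) : ∑ k, dl i k * f k = f i := by
  simp [dl]

theorem sum_ik (F : Fin n → Fin n → Fin n → Fin n → ℝ) :
    ∑ i, ∑ j, ∑ k, ∑ l, dl i k * F i j k l = ∑ i, ∑ j, ∑ l, F i j i l := by
  refine sum_congr rfl fun i _ => sum_congr rfl fun j _ => ?_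
  simp_rw [← mul_sum]
  exact sum_dl i _

theorem sum_jk (F : Fin n → Fin n → Fin n → Fin n → ℝ) :
    ∑ i, ∑ j, ∑ k, ∑ l, dl j k * F i j k l = ∑ i, ∑ j, ∑ l, F i j j l := by
  refine sum_congr rfl fun i _ => sum_congr rfl fun j _ => ?_
  simp_rw [← mul_sum]
  exact sum_dl j _

theorem sum_jl (F : Fin n → Fin n → Fin n → Fin n → ℝ) :
    ∑ i, ∑ j, ∑ k, ∑ l, dl j l * F i j k l = ∑ i, ∑ j, ∑ k, F i j k j := by
  refine sum_congr rfl fun i _ => sum_congr rfl fun j _ => sum_congr rfl fun k _ => ?_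
  exact sum_dl j _

theorem sum_il (F : Fin n → Fin n → Fin n → Fin n → ℝ) :
    ∑ i, ∑ j, ∑ k, ∑ l, dl i l * F i j k l = ∑ i, ∑ j, ∑ k, F i j k i := by
  refine sum_congr rfl fun i _ => sum_congr rfl fun j _ => sum_congr rfl fun k _ => ?_
  exact sum_dl i _

def X (B M : Fin n → Fin n → ℝ) (i j k l : Fin n) : ℝ :=
  B i k * B j l + dl i k * M j l + dl j l * M i k

theorem sum_swap_kl (F : Fin n → Fin n → Fin n → Fin n → ℝ) :
    ∑ i, ∑ j, ∑ k, ∑ l, F i j l k = ∑ i, ∑ j, ∑ k, ∑ l, F i j k l :=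
  sum_congr rfl fun _ _ => sum_congr rfl fun _ _ => sum_comm

theorem sum_prod_ik_jl (f g : Fin n → Fin n → ℝ) :
    ∑ i, ∑ j, ∑ k, ∑ l, f i k * g j l = (∑ i, ∑ k, f i k) * ∑ j, ∑ l, g j l := by
  simp_rw [← mul_sum, ← sum_mul]
  rw [sum_mul]
  refine sum_congr rfl fun i _ => ?_
  rw [mul_sum]

theorem normX (B M : Fin n → Fin n → ℝ) (hBtr : ∑ i, B i i = 0) :
    ∑ i, ∑ j, ∑ k, ∑ l, X B M i j k l ^ 2 =
      (∑ i, ∑ j, B i j ^ 2) ^ 2 + 2 * n * (∑ i, ∑ j, M i j ^ 2) + 2 * (∑ i, M i i) ^ 2 := by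
  have e : ∀ i j k l, X B M i j k l ^ 2 = B i k ^ 2 * B j l ^ 2 + dl i k * M j l ^ 2
      + dl j l * M i k ^ 2 + dl i k * (2 * B i k * (B j l * M j l))
      + dl j l * (2 * B j l * (B i k * M i k)) + dl i k * (dl j l * (2 * (M j l * M i k))) := by
    intro i j k l
    have h1 := dl_sq i k
    have h2 := dl_sq j l
    unfold X
    linear_combination M j l ^ 2 * h1 + M i k ^ 2 * h2
  have h6 : ∑ i, ∑ j, ∑ l, dl j l * (2 * (M j l * M i i)) = 2 * (∑ i, M i i) ^ 2 := by
    simp_rw [sum_dl, sq, sum_mul_sum, mul_sum]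
    exact sum_comm
  have h4 : ∑ i, ∑ j, ∑ l, 2 * B i i * (B j l * M j l) = 0 := by
    simp_rw [← mul_sum]; rw [← sum_mul, ← mul_sum, hBtr]; simp
  have h5 : ∑ i, ∑ j, ∑ k, 2 * B j j * (B i k * M i k) = 0 := by
    rw [sum_comm]; exact h4
  simp_rw [e, sum_add_distrib]
  rw [sum_prod_ik_jl, sum_ik, sum_jl, sum_ik, sum_jl, sum_ik, h6, h4, h5]
  have h3 : ∑ i : Fin n, ∑ j : Fin n, ∑ k, M i k ^ 2 = n * ∑ i, ∑ j, M i j ^ 2 := by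
    simp [mul_sum]
  rw [h3]
  simp
  ring

theorem crossX (B M C : Fin n → Fin n → ℝ) (hB : ∀ i j, B i j = B j i)
    (hC : ∀ i j, C i j = ∑ k, B i k * B j k) :
    ∑ i, ∑ j, ∑ k, ∑ l, X B M i j k l * X B M i j l k =
      (∑ i, ∑ j, C i j ^ 2) + 4 * (∑ i, ∑ j, C i j * M i j) + 4 * (∑ i, ∑ j, M i j ^ 2) := by
  have e : ∀ i j k l, X B M i j k l * X B M i j l k =
      (B i k * B j k) * (B i l * B j l)
      + dl i l * (B i k * B j l * M j k) + dl j k * (B i k * B j l * M i l)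
      + dl i k * (M j l * B i l * B j k) + dl j l * (M i k * B i l * B j k)
      + dl i k * (dl i l * (M j l * M j k)) + dl i k * (dl j k * (M j l * M i l))
      + dl j l * (dl i l * (M i k * M j k)) + dl j l * (dl j k * (M i k * M i l)) := by
    intro i j k l
    unfold X
    ring
  have hc : ∑ i, ∑ j, C i j * M i j = ∑ i, ∑ j, ∑ k, B i k * B j k * M i j := by
    simp_rw [hC, sum_mul]
  have r1 : ∑ i, ∑ j, ∑ k, ∑ l, (B i k * B j k) * (B i l * B j l) = ∑ i, ∑ j, C i j ^ 2 := by
    simp_rw [hC, sq, sum_mul_sum]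
  have r2 : ∑ i, ∑ j, ∑ k, B i k * B j i * M j k = ∑ i, ∑ j, C i j * M i j := by
    rw [hc, sum_comm]
    refine sum_congr rfl fun i _ => ?_
    rw [sum_comm]
    refine sum_congr rfl fun j _ => sum_congr rfl fun k _ => ?_
    rw [hB k j]; ring
  have r3 : ∑ i, ∑ j, ∑ l, B i j * B j l * M i l = ∑ i, ∑ j, C i j * M i j := by
    rw [← r2, sum_comm]
    refine sum_congr rfl fun i _ => sum_congr rfl fun j _ => sum_congr rfl fun k _ => ?_
    ring
  have r4 : ∑ i, ∑ j, ∑ l, M j l * B i l * B j i = ∑ i, ∑ j, C i j * M i j := by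
    rw [← r2]
    refine sum_congr rfl fun i _ => sum_congr rfl fun j _ => sum_congr rfl fun k _ => ?_
    ring
  have r5 : ∑ i, ∑ j, ∑ k, M i k * B i j * B j k = ∑ i, ∑ j, C i j * M i j := by
    rw [← r3]
    refine sum_congr rfl fun i _ => sum_congr rfl fun j _ => sum_congr rfl fun k _ => ?_
    ring
  have m1 : ∑ i, ∑ j, ∑ l, dl i l * (M j l * M j i) = ∑ i, ∑ j, M i j ^ 2 := by
    simp_rw [sum_dl, sq]; exact sum_comm
  have m2 : ∑ i, ∑ j, ∑ l, dl j i * (M j l * M i l) = ∑ i, ∑ j, M i j ^ 2 := by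
    rw [sum_comm]
    refine sum_congr rfl fun i _ => ?_
    rw [sum_comm]
    simp_rw [sum_dl, sq]
  have m3 : ∑ i, ∑ j, ∑ k, dl i j * (M i k * M j k) = ∑ i, ∑ j, M i j ^ 2 := by
    refine sum_congr rfl fun i _ => ?_
    rw [sum_comm]
    simp_rw [sum_dl, sq]
  have m4 : ∑ i, ∑ j, ∑ k, dl j k * (M i k * M i j) = ∑ i, ∑ j, M i j ^ 2 := by
    simp_rw [sum_dl, sq]
  simp_rw [e, sum_add_distrib]
  rw [r1, sum_il, sum_jk, sum_ik, sum_jl, sum_ik, sum_ik, sum_jl, sum_jl,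
    r2, r3, r4, r5, m1, m2, m3, m4]
  ring

theorem sumWX (W : Fin n → Fin n → Fin n → Fin n → ℝ)
    (hanti1 : ∀ i j k l, W i j k l = -W j i k l)
    (hanti2 : ∀ i j k l, W i j k l = -W i j l k)
    (htrfree : ∀ j l, ∑ i, W i j i l = 0) (B M : Fin n → Fin n → ℝ) :
    ∑ i, ∑ j, ∑ k, ∑ l, W i j k l * X B M i j k l =
      ∑ i, ∑ j, ∑ k, ∑ l, W i j k l * B i k * B j l := by
  have e : ∀ i j k l, W i j k l * X B M i j k l = W i j k l * B i k * B j l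
      + dl i k * (W i j k l * M j l) + dl j l * (W i j k l * M i k) := by
    intro i j k l; unfold X; ring
  have a1 : ∑ i, ∑ j, ∑ l, W i j i l * M j l = 0 := by
    rw [sum_comm]
    refine sum_eq_zero fun j _ => ?_
    rw [sum_comm]
    refine sum_eq_zero fun l _ => ?_
    rw [← sum_mul, htrfree, zero_mul]
  have a2 : ∑ i, ∑ j, ∑ k, W i j k j * M i k = 0 := by
    rw [← a1, sum_comm]
    refine sum_congr rfl fun i _ => sum_congr rfl fun j _ => sum_congr rfl fun k _ => ?_
    rw [hanti1, hanti2]; ring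
  simp_rw [e, sum_add_distrib]
  rw [sum_ik, sum_jl, a1, a2]; ring

theorem cs4 (F G : Fin n → Fin n → Fin n → Fin n → ℝ) :
    (∑ i, ∑ j, ∑ k, ∑ l, F i j k l * G i j k l) ^ 2 ≤
      (∑ i, ∑ j, ∑ k, ∑ l, F i j k l ^ 2) * ∑ i, ∑ j, ∑ k, ∑ l, G i j k l ^ 2 := by
  have := sum_mul_sq_le_sq_mul_sq (univ : Finset (Fin n × Fin n × Fin n × Fin n))
    (fun p => F p.1 p.2.1 p.2.2.1 p.2.2.2) (fun p => G p.1 p.2.1 p.2.2.1 p.2.2.2)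
  simpa only [Fintype.sum_prod_type] using this

theorem cs2 (F G : Fin n → Fin n → ℝ) :
    (∑ i, ∑ j, F i j * G i j) ^ 2 ≤ (∑ i, ∑ j, F i j ^ 2) * ∑ i, ∑ j, G i j ^ 2 := by
  have := sum_mul_sq_le_sq_mul_sq (univ : Finset (Fin n × Fin n))
    (fun p => F p.1 p.2) (fun p => G p.1 p.2)
  simpa only [Fintype.sum_prod_type] using this

theorem sum_dl2 (f : Fin n → Fin n → ℝ) : ∑ i, ∑ j, dl i j * f i j = ∑ i, f i i := by
  simp_rw [sum_dl]

/-- Sum of squares of `a C + b δ`. -/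
theorem norm_shift (C : Fin n → Fin n → ℝ) (a b : ℝ) :
    ∑ i, ∑ j, (a * C i j + b * dl i j) ^ 2 =
      a ^ 2 * (∑ i, ∑ j, C i j ^ 2) + 2 * a * b * (∑ i, C i i) + n * b ^ 2 := by
  have e : ∀ i j, (a * C i j + b * dl i j) ^ 2 =
      a ^ 2 * C i j ^ 2 + dl i j * (2 * a * b * C i j) + dl i j * b ^ 2 := by
    intro i j
    linear_combination b ^ 2 * dl_sq i j
  simp_rw [e, sum_add_distrib]
  rw [sum_dl2, sum_dl2]
  simp [mul_sum]

theorem inner_shift (D C : Fin n → Fin n → ℝ) (a b : ℝ) :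
    ∑ i, ∑ j, D i j * (a * C i j + b * dl i j) =
      a * (∑ i, ∑ j, D i j * C i j) + b * ∑ i, D i i := by
  have e : ∀ i j, D i j * (a * C i j + b * dl i j) =
      a * (D i j * C i j) + dl i j * (b * D i j) := by
    intro i j; ring
  simp_rw [e, sum_add_distrib]
  rw [sum_dl2]
  simp [mul_sum]

theorem tr_shift (C : Fin n → Fin n → ℝ) (a b : ℝ) :
    ∑ i, (a * C i i + b * dl i i) = a * (∑ i, C i i) + n * b := by
  simp [dl, sum_add_distrib, mul_sum]

end WeylAux

open WeylAux
theorem pointwise_weyl_ricci_estimate (n : ℕ) (hn : 3 ≤ n)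
    (W : Fin n → Fin n → Fin n → Fin n → ℝ)
    (hanti1 : ∀ i j k l, W i j k l = -W j i k l)
    (hanti2 : ∀ i j k l, W i j k l = -W i j l k)
    (hpair : ∀ i j k l, W i j k l = W k l i j)
    (hbianchi : ∀ i j k l, W i j k l + W i k l j + W i l j k = 0)
    (htrfree : ∀ j l, ∑ i, W i j i l = 0)
    (B : Fin n → Fin n → ℝ)
    (hBsymm : ∀ i j, B i j = B j i)
    (hBtr : ∑ i, B i i = 0) :
    |((n : ℝ) / ((n : ℝ) - 2)) * (∑ i, ∑ j, ∑ k, B i j * B j k * B i k) -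
        ∑ i, ∑ j, ∑ k, ∑ l, W i j k l * B i k * B j l| ≤
      Real.sqrt (((n : ℝ) - 2) / (2 * ((n : ℝ) - 1))) *
        Real.sqrt ((∑ i, ∑ j, ∑ k, ∑ l, W i j k l ^ 2) +
          (2 * (n : ℝ) / ((n : ℝ) - 2)) * ∑ i, ∑ j, B i j ^ 2) *
        (∑ i, ∑ j, B i j ^ 2) := by
  have hn3 : (3 : ℝ) ≤ n := by exact_mod_cast hn
  have hn0 : (n : ℝ) ≠ 0 := by linarith
  have hn1 : (n : ℝ) - 1 ≠ 0 := by linarith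
  have hn2 : (n : ℝ) - 2 ≠ 0 := by linarith
  have hn2p : 0 < (n : ℝ) - 2 := by linarith
  have hn1p : 0 < (n : ℝ) - 1 := by linarith
  obtain ⟨C, hC⟩ : ∃ C : Fin n → Fin n → ℝ, ∀ i j, C i j = ∑ k, B i k * B j k :=
    ⟨fun i j => ∑ k, B i k * B j k, fun _ _ => rfl⟩
  have hCs : ∀ i j, C i j = C j i := by
    intro i j; rw [hC, hC]; exact sum_congr rfl fun k _ => mul_comm _ _
  have hCtr : ∑ i, C i i = ∑ i, ∑ j, B i j ^ 2 := by
    simp_rw [hC, sq]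
  have hQ : ∑ i, ∑ j, ∑ k, B i j * B j k * B i k = ∑ i, ∑ j, B i j * C i j := by
    simp_rw [hC, mul_sum]
    refine sum_congr rfl fun i _ => sum_congr rfl fun j _ => sum_congr rfl fun k _ => ?_
    ring
  rw [hQ]
  obtain ⟨s, hs⟩ : ∃ s, s = ∑ i, ∑ j, B i j ^ 2 := ⟨_, rfl⟩
  obtain ⟨q, hq⟩ : ∃ q, q = ∑ i, ∑ j, C i j ^ 2 := ⟨_, rfl⟩
  obtain ⟨w, hw⟩ : ∃ w, w = ∑ i, ∑ j, ∑ k, ∑ l, W i j k l ^ 2 := ⟨_, rfl⟩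
  obtain ⟨P, hP⟩ : ∃ P, P = ∑ i, ∑ j, ∑ k, ∑ l, W i j k l * B i k * B j l := ⟨_, rfl⟩
  obtain ⟨T, hT⟩ : ∃ T, T = ∑ i, ∑ j, B i j * C i j := ⟨_, rfl⟩
  have hs0 : 0 ≤ s := by
    rw [hs]; exact sum_nonneg fun i _ => sum_nonneg fun j _ => sq_nonneg _
  have hw0 : 0 ≤ w := by
    rw [hw]
    exact sum_nonneg fun i _ => sum_nonneg fun j _ => sum_nonneg fun k _ =>
      sum_nonneg fun l _ => sq_nonneg _
  -- the cubic term
  have hTle : T ^ 2 ≤ s * (q - s ^ 2 / n) := by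
    have h := cs2 B (fun i j => 1 * C i j + (-(s / n)) * dl i j)
    rw [inner_shift, norm_shift, hBtr, hCtr, ← hs, ← hq, ← hT] at h
    calc T ^ 2 = (1 * T + -(s / n) * 0) ^ 2 := by ring
      _ ≤ _ := h
      _ = s * (q - s ^ 2 / n) := by field_simp; ring
  have hq0 : 0 ≤ q - s ^ 2 / n := by
    have h := norm_shift C 1 (-(s / n))
    rw [hCtr, ← hs, ← hq] at h
    have h' : 0 ≤ ∑ i, ∑ j, (1 * C i j + -(s / n) * dl i j) ^ 2 :=
      sum_nonneg fun i _ => sum_nonneg fun j _ => sq_nonneg _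
    rw [h] at h'
    have h3 : 1 ^ 2 * q + 2 * 1 * -(s / n) * s + n * (-(s / n)) ^ 2 = q - s ^ 2 / n := by
      field_simp; ring
    linarith
  -- the Weyl term
  have hPle : 0 ≤ ((n : ℝ) - 2) / (2 * ((n : ℝ) - 1)) * s ^ 2
      - n / (2 * ((n : ℝ) - 2)) * (q - s ^ 2 / n) ∧ P ^ 2 ≤ w * (((n : ℝ) - 2) / (2 * ((n : ℝ) - 1)) * s ^ 2
      - n / (2 * ((n : ℝ) - 2)) * (q - s ^ 2 / n)) := by
    obtain ⟨a, ha⟩ : ∃ a : ℝ, a = 1 / ((n : ℝ) - 2) := ⟨_, rfl⟩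
    obtain ⟨b, hb⟩ : ∃ b : ℝ, b = -s / (2 * ((n : ℝ) - 1) * ((n : ℝ) - 2)) := ⟨_, rfl⟩
    obtain ⟨M, hM⟩ : ∃ M : Fin n → Fin n → ℝ, ∀ i j, M i j = a * C i j + b * dl i j :=
      ⟨_, fun _ _ => rfl⟩
    have hMs : ∀ i j, M i j = M j i := by
      intro i j; rw [hM, hM, hCs i j]; simp [dl, eq_comm]
    have hX := normX B M hBtr
    have hXX := crossX B M C hBsymm hC
    have hWX := sumWX W hanti1 hanti2 htrfree B M
    have hm2 : ∑ i, ∑ j, M i j ^ 2 = a ^ 2 * q + 2 * a * b * s + n * b ^ 2 := by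
      simp_rw [hM]; rw [norm_shift, hCtr, ← hs, ← hq]
    have hcm : ∑ i, ∑ j, C i j * M i j = a * q + b * s := by
      simp_rw [hM]; rw [inner_shift, hCtr, ← hs, hq]; simp_rw [sq]
    have htm : ∑ i, M i i = a * s + n * b := by
      simp_rw [hM]; rw [tr_shift, hCtr, ← hs]
    rw [hm2, htm, ← hs] at hX
    rw [hm2, hcm, ← hq] at hXX
    rw [← hP] at hWX
    have hWX' : ∑ i, ∑ j, ∑ k, ∑ l, W i j k l * X B M i j l k = -P := by
      rw [← hWX, ← sum_swap_kl (fun i j k l => W i j k l * X B M i j k l)]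
      simp_rw [← sum_neg_distrib]
      refine sum_congr rfl fun i _ => sum_congr rfl fun j _ => sum_congr rfl fun k _ =>
        sum_congr rfl fun l _ => ?_
      rw [hanti2]; ring
    have hX' : ∑ i, ∑ j, ∑ k, ∑ l, X B M i j l k ^ 2 = ∑ i, ∑ j, ∑ k, ∑ l, X B M i j k l ^ 2 :=
      sum_swap_kl (fun i j k l => X B M i j k l ^ 2)
    rw [hX] at hX'
    have h := cs4 W (fun i j k l => X B M i j k l - X B M i j l k)
    have e1 : ∑ i, ∑ j, ∑ k, ∑ l, W i j k l * (X B M i j k l - X B M i j l k) = 2 * P := by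
      simp_rw [mul_sub, sum_sub_distrib]
      rw [hWX, hWX']; ring
    have e2 : ∑ i, ∑ j, ∑ k, ∑ l, (X B M i j k l - X B M i j l k) ^ 2 =
        4 * (((n : ℝ) - 2) / (2 * ((n : ℝ) - 1)) * s ^ 2
      - n / (2 * ((n : ℝ) - 2)) * (q - s ^ 2 / n)) := by
      simp_rw [sub_sq, mul_assoc, sum_add_distrib, sum_sub_distrib, ← mul_sum]
      rw [hX, hX', hXX, ha, hb]
      field_simp
      ring
    have h0 : 0 ≤ ∑ i, ∑ j, ∑ k, ∑ l, (X B M i j k l - X B M i j l k) ^ 2 :=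
      sum_nonneg fun i _ => sum_nonneg fun j _ => sum_nonneg fun k _ =>
        sum_nonneg fun l _ => sq_nonneg _
    rw [e2] at h0
    rw [e1, e2, ← hw] at h
    constructor <;> linarith
  rw [← hs, ← hw, ← hP, ← hT]
  obtain ⟨Y, hY⟩ : ∃ Y : ℝ, Y = n / (2 * ((n : ℝ) - 2)) * (q - s ^ 2 / n) := ⟨_, rfl⟩
  obtain ⟨K, hK⟩ : ∃ K : ℝ, K = ((n : ℝ) - 2) / (2 * ((n : ℝ) - 1)) := ⟨_, rfl⟩
  obtain ⟨v, hv⟩ : ∃ v : ℝ, v = 2 * (n : ℝ) / ((n : ℝ) - 2) * s := ⟨_, rfl⟩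
  obtain ⟨R, hR⟩ : ∃ R : ℝ, R = (n : ℝ) / ((n : ℝ) - 2) * T := ⟨_, rfl⟩
  rw [← hY, ← hK] at hPle
  obtain ⟨hu0, hPle⟩ := hPle
  have hY0 : 0 ≤ Y := by rw [hY]; positivity
  have hRle : R ^ 2 ≤ v * Y := by
    have h : v * Y = ((n : ℝ) / ((n : ℝ) - 2)) ^ 2 * (s * (q - s ^ 2 / n)) := by
      rw [hv, hY]; field_simp
    rw [h, hR, mul_pow]
    exact mul_le_mul_of_nonneg_left hTle (sq_nonneg _)
  rw [← hK, ← hv, ← hR]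
  have hK0 : 0 ≤ K := by rw [hK]; positivity
  have hv0 : 0 ≤ v := by rw [hv]; positivity
  have key : (R - P) ^ 2 ≤ K * (w + v) * s ^ 2 := by
    have h1 : (2 * (R * P)) ^ 2 ≤ (w * Y + v * (K * s ^ 2 - Y)) ^ 2 := by
      have h2 : R ^ 2 * P ^ 2 ≤ (v * Y) * (w * (K * s ^ 2 - Y)) :=
        mul_le_mul hRle hPle (sq_nonneg _) (by positivity)
      nlinarith [sq_nonneg (w * Y - v * (K * s ^ 2 - Y))]
    have h3 := (abs_le_of_sq_le_sq' h1 (by positivity)).1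
    linarith
  calc |R - P| ≤ Real.sqrt (K * (w + v) * s ^ 2) := Real.abs_le_sqrt key
    _ = _ := by rw [Real.sqrt_mul (by positivity), Real.sqrt_mul hK0, Real.sqrt_sq hs0]
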